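/- (Example 2: necessity of interaction, impossibility part.) The tuple (p_XY, f₁, f₂, g) with f₁(x,y) = f₂(x,y) = y_x and g(x,y) = y_{1−x} is not asymptotically securely computable using non-interactive communication: there exists ε₀ > 0 such that for every n ≥ 1 and every non-interactive protocol, the correctness condition P((Z₁ⁿ, Z₂ⁿ) ≠ (Y_Xⁿ, Y_Xⁿ)) ≤ ε₀ and the secrecy condition I(M₁, M₂; Y_{X̄}ⁿ) ≤ nε₀ cannot both hold. -/

import Mathlib

open scoped BigOperators

/-- A probability mass function on a finite type, given as a real-valued function. -/
def IsPMF {Ω : Type*} [Fintype Ω] (p : Ω → ℝ) : Prop :=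
  (∀ ω, 0 ≤ p ω) ∧ ∑ ω, p ω = 1

open Classical in
/-- Probability of an event under a pmf on a finite type. -/
noncomputable def probOf {Ω : Type*} [Fintype Ω] (p : Ω → ℝ) (E : Ω → Prop) : ℝ :=
  ∑ ω, if E ω then p ω else 0

/-- Distribution (pushforward) of a random variable `A` under pmf `p`. -/
noncomputable def distOf {Ω β : Type*} [Fintype Ω] [DecidableEq β]
    (p : Ω → ℝ) (A : Ω → β) : β → ℝ :=
  fun b => ∑ ω, if A ω = b then p ω else 0

/-- Shannon entropy (in nats) of a distribution on a finite type. -/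
noncomputable def entD {β : Type*} [Fintype β] (q : β → ℝ) : ℝ :=
  -∑ b, q b * Real.log (q b)

/-- Shannon entropy H(A) of a random variable `A` under pmf `p`. -/
noncomputable def entRV {Ω β : Type*} [Fintype Ω] [Fintype β] [DecidableEq β]
    (p : Ω → ℝ) (A : Ω → β) : ℝ :=
  entD (distOf p A)

/-- Conditional Shannon entropy H(A | C). -/
noncomputable def condEnt {Ω β γ : Type*} [Fintype Ω] [Fintype β] [DecidableEq β]
    [Fintype γ] [DecidableEq γ] (p : Ω → ℝ) (A : Ω → β) (C : Ω → γ) : ℝ :=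
  entRV p (fun ω => (A ω, C ω)) - entRV p C

/-- Mutual information I(A; B). -/
noncomputable def mutInfo {Ω β γ : Type*} [Fintype Ω] [Fintype β] [DecidableEq β]
    [Fintype γ] [DecidableEq γ] (p : Ω → ℝ) (A : Ω → β) (B : Ω → γ) : ℝ :=
  entRV p A + entRV p B - entRV p (fun ω => (A ω, B ω))

/-- Conditional mutual information I(A; B | C). -/
noncomputable def condMutInfo {Ω β γ δ : Type*} [Fintype Ω] [Fintype β] [DecidableEq β]
    [Fintype γ] [DecidableEq γ] [Fintype δ] [DecidableEq δ]
    (p : Ω → ℝ) (A : Ω → β) (B : Ω → γ) (C : Ω → δ) : ℝ :=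
  entRV p (fun ω => (A ω, C ω)) + entRV p (fun ω => (B ω, C ω))
    - entRV p (fun ω => (A ω, B ω, C ω)) - entRV p C

/-- Privacy against Alice with respect to `g` of a transition kernel `k(m|x,y)`,
for the function `f` being computed. -/
def PrivAlice {𝒳 𝒴 𝒵 𝒢 ℳ : Type*} (f : 𝒳 → 𝒴 → 𝒵) (g : 𝒳 → 𝒴 → 𝒢)
    (k : 𝒳 → 𝒴 → ℳ → ℝ) : Prop :=
  ∀ x y₁ y₂, g x y₁ ≠ g x y₂ → f x y₁ = f x y₂ → ∀ m, k x y₁ m = k x y₂ m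

/-- Privacy against Bob with respect to `h` of a transition kernel `k(m|x,y)`,
for the function `f` being computed. -/
def PrivBob {𝒳 𝒴 𝒵 ℋ ℳ : Type*} (f : 𝒳 → 𝒴 → 𝒵) (h : 𝒳 → 𝒴 → ℋ)
    (k : 𝒳 → 𝒴 → ℳ → ℝ) : Prop :=
  ∀ x₁ x₂ y, h x₁ y ≠ h x₂ y → f x₁ y = f x₂ y → ∀ m, k x₁ y m = k x₂ y m

/-- `Y_Xⁿ`: the vector whose `i`-th entry is `Y₀ᵢ` if `Xᵢ = 0` and `Y₁ᵢ` if `Xᵢ = 1`. -/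
def selSame {Ω : Type*} {n : ℕ} (Xv : Ω → Fin n → Bool)
    (Yv : Ω → Fin n → Bool × Bool) : Ω → Fin n → Bool :=
  fun ω i => if Xv ω i then (Yv ω i).2 else (Yv ω i).1

/-- `Y_{X̄}ⁿ`: the vector whose `i`-th entry is `Y_{1−Xᵢ, i}`. -/
def selOpp {Ω : Type*} {n : ℕ} (Xv : Ω → Fin n → Bool)
    (Yv : Ω → Fin n → Bool × Bool) : Ω → Fin n → Bool :=
  fun ω i => if Xv ω i then (Yv ω i).1 else (Yv ω i).2

/-- The inputs `(Xⁿ, Yⁿ) = (Xⁿ, (Y₀ⁿ, Y₁ⁿ))` are `n` i.i.d. copies of three mutually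
independent uniform bits, i.e. the joint distribution is uniform on the `8^n` values. -/
def UnifIID {Ω : Type*} [Fintype Ω] {n : ℕ} (p : Ω → ℝ)
    (Xv : Ω → Fin n → Bool) (Yv : Ω → Fin n → Bool × Bool) : Prop :=
  ∀ (xv : Fin n → Bool) (yv : Fin n → Bool × Bool),
    probOf p (fun ω => Xv ω = xv ∧ Yv ω = yv) = (1 / 8 : ℝ) ^ n

section helpers

variable {Ω : Type*} [Fintype Ω]

theorem sum_distOf_mul {β : Type*} [Fintype β] [DecidableEq β] (p : Ω → ℝ) (A : Ω → β)
    (g : β → ℝ) : ∑ b, distOf p A b * g b = ∑ ω, p ω * g (A ω) := by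
  unfold distOf
  simp only [Finset.sum_mul]
  rw [Finset.sum_comm]
  refine Finset.sum_congr rfl fun ω _ => ?_
  simp [ite_mul]

theorem entRV_eq {β : Type*} [Fintype β] [DecidableEq β] (p : Ω → ℝ) (A : Ω → β) :
    entRV p A = -∑ ω, p ω * Real.log (distOf p A (A ω)) := by
  unfold entRV entD
  rw [sum_distOf_mul p A (fun b => Real.log (distOf p A b))]

theorem distOf_nonneg {β : Type*} [DecidableEq β] {p : Ω → ℝ} (hp : ∀ ω, 0 ≤ p ω)
    (A : Ω → β) (b : β) : 0 ≤ distOf p A b := by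
  unfold distOf
  refine Finset.sum_nonneg fun ω _ => ?_
  split_ifs
  · exact hp ω
  · exact le_rfl

theorem distOf_pos {β : Type*} [DecidableEq β] {p : Ω → ℝ} (hp : ∀ ω, 0 ≤ p ω)
    (A : Ω → β) {ω : Ω} (h : p ω ≠ 0) : 0 < distOf p A (A ω) := by
  unfold distOf
  refine Finset.sum_pos' (fun ω _ => ?_) ⟨ω, Finset.mem_univ _, ?_⟩
  · split_ifs
    · exact hp ω
    · exact le_rfl
  · simpa using lt_of_le_of_ne (hp ω) (Ne.symm h)

theorem distOf_ne_zero_exists {β : Type*} [DecidableEq β] {p : Ω → ℝ}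
    {A : Ω → β} {b : β} (h : distOf p A b ≠ 0) : ∃ ω, A ω = b ∧ p ω ≠ 0 := by
  unfold distOf at h
  obtain ⟨ω, _, hω⟩ := Finset.exists_ne_zero_of_sum_ne_zero h
  refine ⟨ω, ?_⟩
  by_cases hA : A ω = b
  · simp [hA] at hω; exact ⟨hA, hω⟩
  · simp [hA] at hω

theorem sum_distOf {β : Type*} [Fintype β] [DecidableEq β] (p : Ω → ℝ) (A : Ω → β) :
    ∑ b, distOf p A b = ∑ ω, p ω := by
  simpa using sum_distOf_mul p A (fun _ => 1)

/-- marginalising the first coordinate -/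
theorem sum_distOf_fst {β γ : Type*} [Fintype β] [DecidableEq β] [DecidableEq γ]
    (p : Ω → ℝ) (A : Ω → β) (C : Ω → γ) (c : γ) :
    ∑ b, distOf p (fun ω => (A ω, C ω)) (b, c) = distOf p C c := by
  unfold distOf
  rw [Finset.sum_comm]
  refine Finset.sum_congr rfl fun ω _ => ?_
  by_cases h : C ω = c <;> simp [h]

theorem gibbs_term {a b : ℝ} (ha : 0 ≤ a) (hb : 0 ≤ b) (hab : a ≠ 0 → b ≠ 0) :
    a - b ≤ a * (Real.log a - Real.log b) := by
  rcases eq_or_lt_of_le ha with h | h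
  · subst h; simpa using hb
  · have hb' : 0 < b := lt_of_le_of_ne hb (Ne.symm (hab h.ne'))
    have h1 := Real.log_le_sub_one_of_pos (div_pos hb' h)
    rw [Real.log_div hb'.ne' h.ne'] at h1
    have h2 := mul_le_mul_of_nonneg_left h1 ha
    have h3 : a * (b / a - 1) = b - a := by field_simp
    rw [h3] at h2
    linarith

theorem gibbs_term_eq {a b : ℝ} (ha : 0 ≤ a) (hb : 0 ≤ b) (hab : a ≠ 0 → b ≠ 0)
    (h : a - b = a * (Real.log a - Real.log b)) : a = b := by
  rcases eq_or_lt_of_le ha with h0 | h0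
  · subst h0; simp at h; exact h.symm
  · have hb' : 0 < b := lt_of_le_of_ne hb (Ne.symm (hab h0.ne'))
    by_contra hne
    have h1 := Real.log_lt_sub_one_of_pos (div_pos hb' h0)
      (by intro h'; rw [div_eq_one_iff_eq h0.ne'] at h'; exact hne h'.symm)
    rw [Real.log_div hb'.ne' h0.ne'] at h1
    have h2 := mul_lt_mul_of_pos_left h1 h0
    have h3 : a * (b / a - 1) = b - a := by field_simp
    rw [h3] at h2
    linarith

theorem gibbs {ι : Type*} [Fintype ι] (P Q : ι → ℝ) (hP : ∀ i, 0 ≤ P i) (hQ : ∀ i, 0 ≤ Q i)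
    (hPQ : ∀ i, P i ≠ 0 → Q i ≠ 0) (hs : ∑ i, Q i ≤ ∑ i, P i) :
    0 ≤ ∑ i, P i * (Real.log (P i) - Real.log (Q i)) := by
  have := Finset.sum_le_sum fun i (_ : i ∈ Finset.univ) => gibbs_term (hP i) (hQ i) (hPQ i)
  rw [Finset.sum_sub_distrib] at this
  linarith

theorem gibbs_eq {ι : Type*} [Fintype ι] (P Q : ι → ℝ) (hP : ∀ i, 0 ≤ P i) (hQ : ∀ i, 0 ≤ Q i)
    (hPQ : ∀ i, P i ≠ 0 → Q i ≠ 0) (hs : ∑ i, Q i ≤ ∑ i, P i)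
    (h : ∑ i, P i * (Real.log (P i) - Real.log (Q i)) = 0) (i : ι) : P i = Q i := by
  have h1 : ∀ j ∈ Finset.univ, 0 ≤ P j * (Real.log (P j) - Real.log (Q j)) - (P j - Q j) :=
    fun j _ => sub_nonneg.2 (gibbs_term (hP j) (hQ j) (hPQ j))
  have h2 : ∑ j, (P j * (Real.log (P j) - Real.log (Q j)) - (P j - Q j)) = 0 := by
    refine le_antisymm ?_ (Finset.sum_nonneg h1)
    rw [Finset.sum_sub_distrib, Finset.sum_sub_distrib, h]
    linarith
  have h3 := (Finset.sum_eq_zero_iff_of_nonneg h1).1 h2 i (Finset.mem_univ _)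
  exact gibbs_term_eq (hP i) (hQ i) (hPQ i) (by linarith)

theorem condIndep {β γ δ : Type*} [Fintype β] [DecidableEq β]
    [Fintype γ] [DecidableEq γ] [Fintype δ] [DecidableEq δ]
    {p : Ω → ℝ} (hp : IsPMF p) (A : Ω → β) (B : Ω → γ) (C : Ω → δ)
    (h : condMutInfo p A B C = 0) (a : β) (b : γ) (c : δ) :
    distOf p (fun ω => (A ω, B ω, C ω)) (a, b, c) * distOf p C c
      = distOf p (fun ω => (A ω, C ω)) (a, c) * distOf p (fun ω => (B ω, C ω)) (b, c) := by
  set dAC := distOf p (fun ω => (A ω, C ω)) with hAC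
  set dBC := distOf p (fun ω => (B ω, C ω)) with hBC
  set dABC := distOf p (fun ω => (A ω, B ω, C ω)) with hABC
  set dC := distOf p C with hC
  have key := gibbs_eq dABC (fun t => dAC (t.1, t.2.2) * dBC (t.2.1, t.2.2) / dC t.2.2)
    (fun t => distOf_nonneg hp.1 _ _)
    (fun t => div_nonneg (mul_nonneg (distOf_nonneg hp.1 _ _) (distOf_nonneg hp.1 _ _))
      (distOf_nonneg hp.1 _ _))
    (by
      intro t ht
      obtain ⟨ω, rfl, hω⟩ := distOf_ne_zero_exists ht
      exact div_ne_zero (mul_ne_zero (distOf_pos hp.1 (fun ω => (A ω, C ω)) hω).ne'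
        (distOf_pos hp.1 (fun ω => (B ω, C ω)) hω).ne') (distOf_pos hp.1 C hω).ne')
    (by
      rw [hABC, sum_distOf, ← sum_distOf p C, Fintype.sum_prod_type]
      simp only [Fintype.sum_prod_type]
      rw [Finset.sum_comm' (t' := Finset.univ) (s' := fun _ => Finset.univ) (by simp)]
      rw [Finset.sum_congr rfl fun b _ => Finset.sum_comm, Finset.sum_comm]
      refine Finset.sum_le_sum fun c _ => ?_
      have : ∑ b, ∑ a, dAC (a, c) * dBC (b, c) / dC c = dC c * dC c / dC c := by
        simp only [← Finset.sum_div, ← Finset.sum_mul, ← Finset.mul_sum]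
        rw [hAC, hBC, sum_distOf_fst, sum_distOf_fst]
      rw [this]
      simp [hC])
    (by
      rw [hABC, sum_distOf_mul p _ (fun t => Real.log (dABC t) -
        Real.log (dAC (t.1, t.2.2) * dBC (t.2.1, t.2.2) / dC t.2.2))]
      unfold condMutInfo at h
      simp only [entRV_eq] at h
      rw [← hAC, ← hBC, ← hABC, ← hC] at h
      have : ∀ ω, p ω * (Real.log (dABC (A ω, B ω, C ω)) -
          Real.log (dAC (A ω, C ω) * dBC (B ω, C ω) / dC (C ω)))
          = p ω * Real.log (dABC (A ω, B ω, C ω)) - p ω * Real.log (dAC (A ω, C ω))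
            - p ω * Real.log (dBC (B ω, C ω)) + p ω * Real.log (dC (C ω)) := by
        intro ω
        by_cases hω : p ω = 0
        · simp [hω]
        · have h1 := (distOf_pos hp.1 (fun ω => (A ω, C ω)) hω).ne'
          have h2 := (distOf_pos hp.1 (fun ω => (B ω, C ω)) hω).ne'
          have h3 := (distOf_pos hp.1 C hω).ne'
          rw [Real.log_div (mul_ne_zero h1 h2) h3, Real.log_mul h1 h2]
          ring
      simp only [this, Finset.sum_add_distrib, Finset.sum_sub_distrib]
      linarith)
    (a, b, c)
  rw [key]
  by_cases hc : dC c = 0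
  · have : dAC (a, c) = 0 := by
      have h1 := sum_distOf_fst p A C c
      rw [← hC, hc] at h1
      exact (Finset.sum_eq_zero_iff_of_nonneg (fun a _ => distOf_nonneg hp.1 _ _)).1 h1 a
        (Finset.mem_univ _)
    simp [this]
  · simp only
    field_simp

/-- variational lower bound for mutual information -/
theorem mutInfo_ge {β γ : Type*} [Fintype β] [DecidableEq β]
    [Fintype γ] [DecidableEq γ]
    {p : Ω → ℝ} (hp : IsPMF p) (A : Ω → β) (B : Ω → γ) (q : β → γ → ℝ)
    (hq : ∀ a b, 0 < q a b) (hq1 : ∀ a, ∑ b, q a b = 1) :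
    ∑ ω, p ω * (Real.log (q (A ω) (B ω)) - Real.log (distOf p B (B ω))) ≤ mutInfo p A B := by
  have key := gibbs (distOf p (fun ω => (A ω, B ω))) (fun t => distOf p A t.1 * q t.1 t.2)
    (fun t => distOf_nonneg hp.1 _ _)
    (fun t => mul_nonneg (distOf_nonneg hp.1 _ _) (hq _ _).le)
    (by
      intro t ht
      obtain ⟨ω, rfl, hω⟩ := distOf_ne_zero_exists ht
      exact mul_ne_zero (distOf_pos hp.1 A hω).ne' (hq _ _).ne')
    (by
      rw [sum_distOf, Fintype.sum_prod_type]
      simp only [← Finset.mul_sum, hq1, mul_one]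
      rw [sum_distOf])
  rw [sum_distOf_mul p (fun ω => (A ω, B ω)) (fun t => Real.log _ - Real.log _)] at key
  unfold mutInfo
  simp only [entRV_eq]
  have : ∀ ω, p ω * (Real.log (distOf p (fun ω => (A ω, B ω)) (A ω, B ω)) -
      Real.log (distOf p A (A ω) * q (A ω) (B ω)))
      = p ω * Real.log (distOf p (fun ω => (A ω, B ω)) (A ω, B ω))
        - p ω * Real.log (distOf p A (A ω)) - p ω * Real.log (q (A ω) (B ω)) := by
    intro ω
    by_cases hω : p ω = 0
    · simp [hω]
    · rw [Real.log_mul (distOf_pos hp.1 A hω).ne' (hq _ _).ne']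
      ring
  simp only [this, Finset.sum_sub_distrib] at key
  simp only [mul_sub, Finset.sum_sub_distrib]
  linarith

/-- averaging: some point of `S` does at least as well as the average over `S`. -/
theorem exists_good {ι : Type*} [Fintype ι] (α : ι → ℝ) (hα : ∀ a, 0 ≤ α a)
    (S : ι → Prop) [DecidablePred S] (e : ι → ℝ) (he : ∀ a, 0 ≤ e a) {ε s : ℝ} (hs : 0 < s)
    (hS : ∑ a, α a * (if S a then 1 else 0) = s) (h : ∑ a, α a * e a ≤ ε * s) :
    ∃ a, S a ∧ e a ≤ ε := by
  by_contra! hcon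
  have h1 : ∀ a ∈ Finset.univ, ε * (α a * (if S a then 1 else 0)) ≤ α a * e a := by
    intro a _
    by_cases ha : S a
    · simp only [ha, if_true]
      nlinarith [hα a, hcon a ha]
    · simp only [ha, if_false]
      simpa using mul_nonneg (hα a) (he a)
  have h2 : ∃ a ∈ Finset.univ, ε * (α a * (if S a then 1 else 0)) < α a * e a := by
    obtain ⟨a, ha, hne⟩ := Finset.exists_ne_zero_of_sum_ne_zero (hS.trans_ne hs.ne')
    refine ⟨a, ha, ?_⟩
    by_cases hSa : S a
    · simp only [hSa, if_true] at hne ⊢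
      have : 0 < α a := lt_of_le_of_ne (hα a) (by intro h'; simp [← h'] at hne)
      nlinarith [hcon a hSa]
    · simp [hSa] at hne
  have := Finset.sum_lt_sum h1 h2
  rw [← Finset.mul_sum, hS] at this
  linarith

/-- sum of a function of one coordinate -/
theorem sum_coord {n : ℕ} {β : Type*} [Fintype β] [DecidableEq β] (i : Fin n) (g : β → ℝ) :
    (∑ x : Fin n → β, g (x i)) * (Fintype.card β : ℝ)
      = (∑ b, g b) * (Fintype.card β : ℝ) ^ n := by
  have h : ∀ f : β → ℝ, ∑ x : Fin n → β, f (x i)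
      = (∑ b, f b) * (Fintype.card ({j // j ≠ i} → β) : ℝ) := by
    intro f
    rw [← (Equiv.funSplitAt i β).symm.sum_comp, Fintype.sum_prod_type]
    simp [Finset.sum_mul, mul_comm]
  have h1 := h (fun _ => 1)
  simp only [Finset.sum_const, Finset.card_univ, nsmul_eq_mul, mul_one, Fintype.card_fun,
    Fintype.card_fin] at h1
  rw [h]
  push_cast at h1 ⊢
  rw [h1]; simp; ring

theorem expect_unif {n : ℕ} {p : Ω → ℝ} {Xv : Ω → Fin n → Bool} {Yv : Ω → Fin n → Bool × Bool}
    (h : UnifIID p Xv Yv) (g : (Fin n → Bool) → (Fin n → Bool × Bool) → ℝ) :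
    ∑ ω, p ω * g (Xv ω) (Yv ω) = (1 / 8 : ℝ) ^ n * ∑ x, ∑ y, g x y := by
  rw [← sum_distOf_mul p (fun ω => (Xv ω, Yv ω)) (fun t => g t.1 t.2), Fintype.sum_prod_type,
    Finset.mul_sum]
  refine Finset.sum_congr rfl fun x _ => ?_
  rw [Finset.mul_sum]
  refine Finset.sum_congr rfl fun y _ => ?_
  congr 1
  rw [← h x y]
  unfold distOf probOf
  refine Finset.sum_congr rfl fun ω _ => ?_
  simp [Prod.ext_iff]

theorem expect_X {n : ℕ} {p : Ω → ℝ} {Xv : Ω → Fin n → Bool} {Yv : Ω → Fin n → Bool × Bool}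
    (h : UnifIID p Xv Yv) (i : Fin n) (g : Bool → ℝ) :
    ∑ ω, p ω * g (Xv ω i) = (g true + g false) / 2 := by
  rw [expect_unif h (fun x _ => g (x i))]
  have h1 := sum_coord i g
  simp only [Fintype.card_bool, Fintype.sum_bool] at h1
  simp only [Finset.sum_const, Finset.card_univ, nsmul_eq_mul, ← Finset.mul_sum,
    Fintype.card_fun, Fintype.card_fin, Fintype.card_prod, Fintype.card_bool]
  push_cast at h1 ⊢
  have h2 : ∑ x : Fin n → Bool, g (x i) = (g true + g false) * 2 ^ n / 2 := by linarith
  rw [h2]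
  have h3 : (1 / 8 : ℝ) ^ n * ((2 * 2) ^ n * 2 ^ n) = 1 := by
    rw [← mul_pow, ← mul_pow]; norm_num
  linear_combination (g true + g false) / 2 * h3

theorem expect_Y {n : ℕ} {p : Ω → ℝ} {Xv : Ω → Fin n → Bool} {Yv : Ω → Fin n → Bool × Bool}
    (h : UnifIID p Xv Yv) (i : Fin n) (g : Bool × Bool → ℝ) :
    ∑ ω, p ω * g (Yv ω i) = (∑ b, g b) / 4 := by
  rw [expect_unif h (fun _ y => g (y i))]
  have h1 := sum_coord i g
  simp only [Fintype.card_bool, Fintype.card_prod] at h1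
  simp only [Finset.sum_const, Finset.card_univ, nsmul_eq_mul, ← Finset.mul_sum,
    Fintype.card_fun, Fintype.card_fin, Fintype.card_prod, Fintype.card_bool]
  push_cast at h1 ⊢
  have h2 : ∑ x : Fin n → Bool × Bool, g (x i) = (∑ b, g b) * 4 ^ n / 4 := by
    linarith
  rw [h2]
  have h3 : (1 / 8 : ℝ) ^ n * (2 ^ n * 4 ^ n) = 1 := by
    rw [← mul_pow, ← mul_pow]; norm_num
  linear_combination (∑ b, g b) / 4 * h3

theorem dist_opp {n : ℕ} {p : Ω → ℝ} {Xv : Ω → Fin n → Bool} {Yv : Ω → Fin n → Bool × Bool}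
    (h : UnifIID p Xv Yv) (w : Fin n → Bool) :
    distOf p (selOpp Xv Yv) w = (1 / 2 : ℝ) ^ n := by
  refine Eq.trans ?_ ((expect_unif h (fun (x : Fin n → Bool) (y : Fin n → Bool × Bool) =>
        if (fun i => if x i then (y i).1 else (y i).2) = w then (1 : ℝ) else 0)).trans ?_)
  · unfold distOf selOpp
    refine Finset.sum_congr rfl fun ω _ => ?_
    simp
  have h1 : ∀ x : Fin n → Bool, ∑ y : Fin n → Bool × Bool,
      (if (fun i => if x i then (y i).1 else (y i).2) = w then (1 : ℝ) else 0) = 2 ^ n := by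
    intro x
    have e1 : ∑ y : Fin n → Bool × Bool,
        (if (fun i => if x i then (y i).1 else (y i).2) = w then (1 : ℝ) else 0)
        = ∑ y : Fin n → Bool × Bool, if (fun i => (y i).2) = w then (1 : ℝ) else 0 := by
      refine Fintype.sum_equiv
        (Equiv.piCongrRight fun i => if x i then Equiv.prodComm Bool Bool else Equiv.refl _)
        _ _ fun y => ?_
      congr 2
      funext i
      cases hx : x i <;> simp [hx]
    rw [e1, ← (Equiv.arrowProdEquivProdArrow (Fin n) (fun _ => Bool) (fun _ => Bool)).symm.sum_comp,
      Fintype.sum_prod_type]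
    change ∑ _x : Fin n → Bool, ∑ y : Fin n → Bool, (if y = w then (1 : ℝ) else 0) = 2 ^ n
    simp
  simp only [h1]
  simp only [Finset.sum_const, Finset.card_univ, nsmul_eq_mul,
    Fintype.card_fun, Fintype.card_fin, Fintype.card_bool]
  push_cast
  rw [← mul_pow, ← mul_pow]; norm_num

theorem distOf_congr {β γ : Type*} [DecidableEq β] [DecidableEq γ] (p : Ω → ℝ)
    {A : Ω → β} {B : Ω → γ} {a : β} {b : γ} (h : ∀ ω, A ω = a ↔ B ω = b) :
    distOf p A a = distOf p B b := by
  unfold distOf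
  refine Finset.sum_congr rfl fun ω _ => ?_
  simp [h ω]

theorem dist_X {n : ℕ} {p : Ω → ℝ} {Xv : Ω → Fin n → Bool} {Yv : Ω → Fin n → Bool × Bool}
    (h : UnifIID p Xv Yv) (x : Fin n → Bool) : distOf p Xv x = (1 / 2 : ℝ) ^ n := by
  refine Eq.trans ?_ ((expect_unif h (fun (x' : Fin n → Bool) (_ : Fin n → Bool × Bool) =>
        if x' = x then (1 : ℝ) else 0)).trans ?_)
  · unfold distOf
    refine Finset.sum_congr rfl fun ω _ => ?_
    simp
  simp
  rw [← inv_pow, ← inv_pow, ← mul_pow]; norm_num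

theorem dist_Y {n : ℕ} {p : Ω → ℝ} {Xv : Ω → Fin n → Bool} {Yv : Ω → Fin n → Bool × Bool}
    (h : UnifIID p Xv Yv) (y : Fin n → Bool × Bool) : distOf p Yv y = (1 / 4 : ℝ) ^ n := by
  refine Eq.trans ?_ ((expect_unif h (fun (_ : Fin n → Bool) (y' : Fin n → Bool × Bool) =>
        if y' = y then (1 : ℝ) else 0)).trans ?_)
  · unfold distOf
    refine Finset.sum_congr rfl fun ω _ => ?_
    simp
  simp
  rw [← inv_pow, ← inv_pow, ← mul_pow]; norm_num

theorem dist_XY {n : ℕ} {p : Ω → ℝ} {Xv : Ω → Fin n → Bool} {Yv : Ω → Fin n → Bool × Bool}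
    (h : UnifIID p Xv Yv) (x : Fin n → Bool) (y : Fin n → Bool × Bool) :
    distOf p (fun ω => (Xv ω, Yv ω)) (x, y) = (1 / 8 : ℝ) ^ n := by
  rw [← h x y]
  unfold distOf probOf
  refine Finset.sum_congr rfl fun ω _ => ?_
  simp [Prod.ext_iff]

theorem full_indep {n : ℕ} {μ ν : Type*} [Fintype μ] [DecidableEq μ] [Fintype ν] [DecidableEq ν]
    {p : Ω → ℝ} (hp : IsPMF p) {Xv : Ω → Fin n → Bool} {Yv : Ω → Fin n → Bool × Bool}
    {M₁ : Ω → μ} {M₂ : Ω → ν}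
    (h : UnifIID p Xv Yv)
    (h1 : condMutInfo p M₁ (fun ω => (Yv ω, M₂ ω)) Xv = 0)
    (h2 : condMutInfo p M₂ (fun ω => (Xv ω, M₁ ω)) Yv = 0)
    (a : (Fin n → Bool) × μ) (b : (Fin n → Bool × Bool) × ν) :
    distOf p (fun ω => ((Xv ω, M₁ ω), (Yv ω, M₂ ω))) (a, b)
      = distOf p (fun ω => (Xv ω, M₁ ω)) a * distOf p (fun ω => (Yv ω, M₂ ω)) b := by
  obtain ⟨x, m₁⟩ := a
  obtain ⟨y, m₂⟩ := b
  have e1 := condIndep hp _ _ _ h1 m₁ (y, m₂) x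
  have e2 : distOf p (fun ω => ((Yv ω, M₂ ω), Xv ω)) ((y, m₂), x) * (1 / 4 : ℝ) ^ n
      = distOf p (fun ω => (Yv ω, M₂ ω)) (y, m₂) * (1 / 8 : ℝ) ^ n := by
    rw [← sum_distOf_fst p M₁, Finset.sum_mul, ← dist_XY h x y,
      ← sum_distOf_fst p M₁ (fun ω => (Xv ω, Yv ω)),
      Finset.mul_sum]
    refine Finset.sum_congr rfl fun m _ => ?_
    have := condIndep hp _ _ _ h2 m₂ (x, m) y
    rw [dist_Y h] at this
    convert this using 2
    · apply distOf_congr; intro ω; simp only [Prod.mk.injEq]; tauto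
    · apply distOf_congr; intro ω; simp only [Prod.mk.injEq]; tauto
    · apply distOf_congr; intro ω; simp only [Prod.mk.injEq]; tauto
  rw [dist_X h] at e1
  have e3 : distOf p (fun ω => (M₁ ω, (Yv ω, M₂ ω), Xv ω)) (m₁, (y, m₂), x)
      = distOf p (fun ω => ((Xv ω, M₁ ω), (Yv ω, M₂ ω))) ((x, m₁), (y, m₂)) := by
    apply distOf_congr; intro ω; simp only [Prod.mk.injEq]; tauto
  have e4 : distOf p (fun ω => (M₁ ω, Xv ω)) (m₁, x)
      = distOf p (fun ω => (Xv ω, M₁ ω)) (x, m₁) := by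
    apply distOf_congr; intro ω; simp only [Prod.mk.injEq]; tauto
  rw [e3, e4] at e1
  have e5 : (1 / 8 : ℝ) ^ n = (1 / 2) ^ n * (1 / 4) ^ n := by rw [← mul_pow]; norm_num
  have p2 : (0 : ℝ) < (1 / 2) ^ n := by positivity
  have p4 : (0 : ℝ) < (1 / 4) ^ n := by positivity
  have e6 : distOf p (fun ω => ((Yv ω, M₂ ω), Xv ω)) ((y, m₂), x)
      = distOf p (fun ω => (Yv ω, M₂ ω)) (y, m₂) * (1 / 2 : ℝ) ^ n := by
    apply mul_right_cancel₀ p4.ne'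
    rw [e2, e5]; ring
  rw [e6] at e1
  apply mul_right_cancel₀ p2.ne'
  rw [e1]; ring

/-- Fubini for independent variables. -/
theorem sum_indep {β γ : Type*} [Fintype β] [DecidableEq β] [Fintype γ] [DecidableEq γ]
    {p : Ω → ℝ} {A : Ω → β} {B : Ω → γ}
    (h : ∀ a b, distOf p (fun ω => (A ω, B ω)) (a, b) = distOf p A a * distOf p B b)
    (F : β → γ → ℝ) :
    ∑ ω, p ω * F (A ω) (B ω) = ∑ a, distOf p A a * ∑ ω, p ω * F a (B ω) := by
  rw [← sum_distOf_mul p (fun ω => (A ω, B ω)) (fun t => F t.1 t.2), Fintype.sum_prod_type]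
  refine Finset.sum_congr rfl fun a _ => ?_
  rw [← sum_distOf_mul p B (fun b => F a b), Finset.mul_sum]
  refine Finset.sum_congr rfl fun b _ => ?_
  rw [h]; ring

/-- Fixing the first of two independent variables to a value in `S`. -/
theorem exists_fix {β γ : Type*} [Fintype β] [DecidableEq β] [Fintype γ] [DecidableEq γ]
    {p : Ω → ℝ} (hp : IsPMF p) {A : Ω → β} {B : Ω → γ}
    (h : ∀ a b, distOf p (fun ω => (A ω, B ω)) (a, b) = distOf p A a * distOf p B b)
    (F : β → γ → ℝ) (hF : ∀ a b, 0 ≤ F a b) (S : β → Prop) [DecidablePred S] {ε s : ℝ}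
    (hs : 0 < s) (hS : ∑ ω, p ω * (if S (A ω) then 1 else 0) = s)
    (hE : ∑ ω, p ω * F (A ω) (B ω) ≤ ε * s) :
    ∃ a, S a ∧ ∑ ω, p ω * F a (B ω) ≤ ε := by
  refine exists_good (distOf p A) (distOf_nonneg hp.1 A) S
    (fun a => ∑ ω, p ω * F a (B ω))
    (fun a => Finset.sum_nonneg fun ω _ => mul_nonneg (hp.1 ω) (hF _ _)) hs ?_ ?_
  · rw [sum_distOf_mul p A (fun a => if S a then 1 else 0), hS]
  · rw [← sum_indep h]; exact hE

/-- From good estimators of each bit to mutual information. -/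
theorem mutInfo_of_est {n : ℕ} {β : Type*} [Fintype β] [DecidableEq β]
    {p : Ω → ℝ} (hp : IsPMF p) {Xv : Ω → Fin n → Bool} {Yv : Ω → Fin n → Bool × Bool}
    (h : UnifIID p Xv Yv) (A : Ω → β) (est : β → Fin n → Bool) {δ : ℝ}
    (hest : ∀ i, ∑ ω, p ω * (if est (A ω) i = selOpp Xv Yv ω i then 0 else 1) ≤ δ) :
    n * (Real.log (3 / 2) - δ * Real.log 3) ≤ mutInfo p A (selOpp Xv Yv) := by
  have key := mutInfo_ge hp A (selOpp Xv Yv)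
    (fun a w => ∏ i, if est a i = w i then (3 / 4 : ℝ) else 1 / 4)
    (fun a w => Finset.prod_pos fun i _ => by split_ifs <;> norm_num)
    (fun a => by
      have := Finset.prod_univ_sum (fun _ : Fin n => (Finset.univ : Finset Bool))
        (fun i b => if est a i = b then (3 / 4 : ℝ) else 1 / 4)
      rw [Fintype.piFinset_univ] at this
      rw [← this]
      refine Finset.prod_eq_one fun i _ => ?_
      cases est a i <;> norm_num)
  refine le_trans ?_ key
  have e1 : ∀ ω, p ω * (Real.log (∏ i, if est (A ω) i = selOpp Xv Yv ω i then (3 / 4 : ℝ) else 1 / 4)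
      - Real.log (distOf p (selOpp Xv Yv) (selOpp Xv Yv ω)))
      = p ω * (n * Real.log (3 / 2)) - ∑ i,
        (p ω * (if est (A ω) i = selOpp Xv Yv ω i then 0 else 1)) * Real.log 3 := by
    intro ω
    rw [dist_opp h, Real.log_prod (fun i _ => by split_ifs <;> norm_num), Real.log_pow]
    have e2 : ∀ i, Real.log (if est (A ω) i = selOpp Xv Yv ω i then (3 / 4 : ℝ) else 1 / 4)
        = (Real.log (3 / 2) + Real.log (1 / 2))
          - (if est (A ω) i = selOpp Xv Yv ω i then 0 else 1) * Real.log 3 := by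
      intro i
      rw [← Real.log_mul (by norm_num) (by norm_num)]
      split_ifs
      · norm_num
      · rw [one_mul, ← Real.log_div (by norm_num) (by norm_num)]; norm_num
    simp only [e2, Finset.sum_sub_distrib, Finset.sum_const, Finset.card_univ, Fintype.card_fin,
      nsmul_eq_mul, mul_assoc, ← Finset.mul_sum]
    ring
  simp only [e1, Finset.sum_sub_distrib]
  rw [← Finset.sum_mul, hp.2, Finset.sum_comm]
  have hl : 0 ≤ Real.log 3 := Real.log_nonneg (by norm_num)
  have e3 : ∑ i : Fin n, ∑ ω, (p ω * (if est (A ω) i = selOpp Xv Yv ω i then 0 else 1)) * Real.log 3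
      ≤ ∑ i : Fin n, δ * Real.log 3 := by
    refine Finset.sum_le_sum fun i _ => ?_
    rw [← Finset.sum_mul]
    exact mul_le_mul_of_nonneg_right (hest i) hl
  simp only [Finset.sum_const, Finset.card_univ, Fintype.card_fin, nsmul_eq_mul] at e3
  linarith

end helpers


/-- **Example 2, impossibility part: necessity of interaction.** The tuple with
`f₁(x,y) = f₂(x,y) = y_x` and `g(x,y) = y_{1−x}` is not asymptotically securely
computable using non-interactive communication: there is `ε₀ > 0` such that for every
`n ≥ 1` and every non-interactive protocol (messages `M₁`, a randomized function of
`Xⁿ`, and `M₂`, a randomized function of `Yⁿ`; outputs `Z₁ⁿ` a function of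
`(Xⁿ, M₁, M₂)` and `Z₂ⁿ` a function of `(Yⁿ, M₁, M₂)`), correctness
`P((Z₁ⁿ, Z₂ⁿ) ≠ (Y_Xⁿ, Y_Xⁿ)) ≤ ε₀` and secrecy `I(M₁, M₂; Y_{X̄}ⁿ) ≤ n ε₀`
cannot both hold. -/
theorem interaction_necessary :
    ∃ ε₀ : ℝ, 0 < ε₀ ∧
      ∀ (n : ℕ), 1 ≤ n →
      ∀ (Ω 𝓜₁ 𝓜₂ : Type) [Fintype Ω] [Fintype 𝓜₁] [DecidableEq 𝓜₁]
        [Fintype 𝓜₂] [DecidableEq 𝓜₂],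
      ∀ (p : Ω → ℝ) (Xv : Ω → Fin n → Bool) (Yv : Ω → Fin n → Bool × Bool)
        (M₁ : Ω → 𝓜₁) (M₂ : Ω → 𝓜₂)
        (Z₁ Z₂ : Ω → Fin n → Bool),
        IsPMF p →
        UnifIID p Xv Yv →
        condMutInfo p M₁ (fun ω => (Yv ω, M₂ ω)) Xv = 0 →
        condMutInfo p M₂ (fun ω => (Xv ω, M₁ ω)) Yv = 0 →
        (∃ φ₁ : (Fin n → Bool) × 𝓜₁ × 𝓜₂ → Fin n → Bool,
          ∀ ω, Z₁ ω = φ₁ (Xv ω, M₁ ω, M₂ ω)) →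
        (∃ φ₂ : (Fin n → Bool × Bool) × 𝓜₁ × 𝓜₂ → Fin n → Bool,
          ∀ ω, Z₂ ω = φ₂ (Yv ω, M₁ ω, M₂ ω)) →
        ¬ (probOf p (fun ω => (Z₁ ω, Z₂ ω) ≠ (selSame Xv Yv ω, selSame Xv Yv ω)) ≤ ε₀ ∧
           mutInfo p (fun ω => (M₁ ω, M₂ ω)) (selOpp Xv Yv) ≤ n * ε₀) := by
  classical
  refine ⟨1 / 100, by norm_num, ?_⟩
  intro n hn Ω 𝓜₁ 𝓜₂ _ _ _ _ _ p Xv Yv M₁ M₂ Z₁ Z₂ hp hU hI1 hI2 hφ₁ hφ₂ hcon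
  obtain ⟨φ₁, hφ₁⟩ := hφ₁
  obtain ⟨φ₂, hφ₂⟩ := hφ₂
  obtain ⟨hc, hsec⟩ := hcon
  have hind := full_indep hp hU hI1 hI2
  have hind' : ∀ b a, distOf p (fun ω => ((Yv ω, M₂ ω), (Xv ω, M₁ ω))) (b, a)
      = distOf p (fun ω => (Yv ω, M₂ ω)) b * distOf p (fun ω => (Xv ω, M₁ ω)) a := by
    intro b a
    rw [mul_comm, ← hind a b]
    apply distOf_congr
    intro ω
    simp only [Prod.mk.injEq]
    tauto
  -- per-coordinate correctness
  have hc1 : ∀ i, ∑ ω, p ω * (if φ₁ (Xv ω, M₁ ω, M₂ ω) i = selSame Xv Yv ω i then 0 else 1)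
      ≤ 1 / 100 := by
    intro i
    refine le_trans ?_ hc
    unfold probOf
    refine Finset.sum_le_sum fun ω _ => ?_
    by_cases hz : Z₁ ω = selSame Xv Yv ω
    · have : φ₁ (Xv ω, M₁ ω, M₂ ω) i = selSame Xv Yv ω i := by rw [← hφ₁, hz]
      simp only [this, if_true, mul_zero]
      split_ifs
      · exact hp.1 ω
      · exact le_rfl
    · have : (Z₁ ω, Z₂ ω) ≠ (selSame Xv Yv ω, selSame Xv Yv ω) := by
        intro h; exact hz (Prod.ext_iff.1 h).1
      rw [if_pos this]
      have := hp.1 ω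
      split_ifs <;> simp [this]
  have hc2 : ∀ i, ∑ ω, p ω * (if φ₂ (Yv ω, M₁ ω, M₂ ω) i = selSame Xv Yv ω i then 0 else 1)
      ≤ 1 / 100 := by
    intro i
    refine le_trans ?_ hc
    unfold probOf
    refine Finset.sum_le_sum fun ω _ => ?_
    by_cases hz : Z₂ ω = selSame Xv Yv ω
    · have : φ₂ (Yv ω, M₁ ω, M₂ ω) i = selSame Xv Yv ω i := by rw [← hφ₂, hz]
      simp only [this, if_true, mul_zero]
      split_ifs
      · exact hp.1 ω
      · exact le_rfl
    · have : (Z₁ ω, Z₂ ω) ≠ (selSame Xv Yv ω, selSame Xv Yv ω) := by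
        intro h; exact hz (Prod.ext_iff.1 h).2
      rw [if_pos this]
      have := hp.1 ω
      split_ifs <;> simp [this]
  -- estimating `Y_{c,i}` from `M₂`
  have hY : ∀ (i : Fin n) (c : Bool), ∃ f : 𝓜₂ → Bool,
      ∑ ω, p ω * (if f (M₂ ω) = (if c then (Yv ω i).2 else (Yv ω i).1) then 0 else 1)
        ≤ 2 / 100 := by
    intro i c
    obtain ⟨a, ha, hae⟩ := exists_fix hp hind
      (fun a b => if φ₁ (a.1, a.2, b.2) i = (if a.1 i then (b.1 i).2 else (b.1 i).1)
        then (0 : ℝ) else 1)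
      (fun a b => by split_ifs <;> norm_num)
      (fun a => a.1 i = c) (ε := 2 / 100) (s := 1 / 2) (by norm_num)
      (by
        have := expect_X hU i (fun b => if b = c then 1 else 0)
        rw [this]
        cases c <;> norm_num)
      (by
        have := hc1 i
        unfold selSame at this
        norm_num at this ⊢
        exact this)
    refine ⟨fun m => φ₁ (a.1, a.2, m) i, ?_⟩
    simp only [ha] at hae
    exact hae
  -- estimating `X_i` from `M₁`
  have hX : ∀ i : Fin n, ∃ f : 𝓜₁ → Bool,
      ∑ ω, p ω * (if f (M₁ ω) = Xv ω i then 0 else 1) ≤ 4 / 100 := by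
    intro i
    obtain ⟨b, hb, hbe⟩ := exists_fix hp hind'
      (fun b a => if φ₂ (b.1, a.2, b.2) i = (if a.1 i then (b.1 i).2 else (b.1 i).1)
        then (0 : ℝ) else 1)
      (fun b a => by split_ifs <;> norm_num)
      (fun b => b.1 i = (false, true)) (ε := 4 / 100) (s := 1 / 4) (by norm_num)
      (by
        have := expect_Y hU i (fun b => if b = (false, true) then 1 else 0)
        rw [this]
        simp)
      (by
        have := hc2 i
        unfold selSame at this
        norm_num at this ⊢
        exact this)
    refine ⟨fun m => φ₂ (b.1, m, b.2) i, ?_⟩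
    simp only [hb] at hbe
    simpa using hbe
  choose fY hfY using hY
  choose fX hfX using hX
  have hfin := mutInfo_of_est hp hU (fun ω => (M₁ ω, M₂ ω))
    (fun m i => fY i (!(fX i m.1)) m.2) (δ := 8 / 100) (by
      intro i
      have hsum := add_le_add (add_le_add (hfX i) (hfY i true)) (hfY i false)
      rw [← Finset.sum_add_distrib, ← Finset.sum_add_distrib] at hsum
      refine le_trans (Finset.sum_le_sum fun ω _ => ?_) (hsum.trans (by norm_num))
      rw [← mul_add, ← mul_add]
      refine mul_le_mul_of_nonneg_left ?_ (hp.1 ω)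
      unfold selOpp
      dsimp only
      cases hx : Xv ω i <;> cases hf : fX i (M₁ ω) <;> simp <;> split_ifs <;> norm_num)
  have hn' : (1 : ℝ) ≤ n := by exact_mod_cast hn
  have l1 : (1 / 3 : ℝ) ≤ Real.log (3 / 2) := by
    have := Real.one_sub_inv_le_log_of_pos (show (0 : ℝ) < 3 / 2 by norm_num)
    norm_num at this ⊢
    exact this
  have l2 : Real.log 3 ≤ 2 := by
    have := Real.log_le_sub_one_of_pos (show (0 : ℝ) < 3 by norm_num)
    norm_num at this ⊢
    exact this
  have := hfin.trans hsec
  nlinarith
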